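/- Let 0 < α < 1. For every λ > 0 and T > 0, E_{α,1}(-λ T^α) > 0; in particular E_{α,1}(-λ T^α) ≠ 0. -/

import Mathlib

open Real

/-- The one-parameter Mittag-Leffler function `E_{α,1}` on the reals. -/
noncomputable def mittagLeffler (α : ℝ) (x : ℝ) : ℝ :=
  ∑' k : ℕ, x ^ k / Real.Gamma (α * k + 1)

/-!
Up to the factor `Γ(1-α)`, the Caputo derivative of order `α` on `[0, 1]` of a function `u`, taken
at `1`, is `∫₀¹ (1-s)^(-α) u'(s) ds`.

* For `u(s) = E_{α,1}(-y s^α)` it equals `-y Γ(1-α) E_{α,1}(-y)`: `E_{α,1}` is an eigenfunction of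
  the Caputo derivative, by termwise integration and Euler's beta integral.
* If `u` is minimal at `1`, it is at most `u(1) - u(0)`, by integration by parts against the
  increasing weight `(1-s)^(-α)`.

If `y` minimizes `E_{α,1}(-·)` on `[0, x]`, then `u` is minimal at `1`, so that
`-y Γ(1-α) E_{α,1}(-y) ≤ E_{α,1}(-y) - 1`, that is `E_{α,1}(-y) ≥ 1 / (1 + Γ(1-α) y)`.
Hence `E_{α,1}(-x) ≥ 1 / (1 + Γ(1-α) x) > 0`.
-/

open Set MeasureTheory Filter Topology ProbabilityTheory

lemma rpow_mul_exp_neg_le_Gamma_add_one {M x : ℝ} (hM : 0 ≤ M) (hx : 0 ≤ x) :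
    M ^ x * exp (-M) ≤ Gamma (x + 1) := by
  have hint : IntegrableOn (fun t => exp (-t) * t ^ x) (Ioi 0) := by
    simpa only [add_sub_cancel_right] using GammaIntegral_convergent (s := x + 1) (by linarith)
  have hsub : Ioi M ⊆ Ioi 0 := Ioi_subset_Ioi hM
  calc M ^ x * exp (-M) = ∫ t in Ioi M, exp (-t) * M ^ x := by
        rw [integral_mul_const, integral_exp_neg_Ioi, mul_comm]
    _ ≤ ∫ t in Ioi M, exp (-t) * t ^ x := by
        refine setIntegral_mono_on ((integrableOn_exp_neg_Ioi M).mul_const _)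
          (hint.mono_set hsub) measurableSet_Ioi fun t ht => ?_
        gcongr
        exact le_of_lt ht
    _ ≤ ∫ t in Ioi 0, exp (-t) * t ^ x := by
        refine setIntegral_mono_set hint ?_ hsub.eventuallyLE
        filter_upwards [ae_restrict_mem measurableSet_Ioi] with t ht
        have : 0 < t := ht
        simp only [Pi.zero_apply]
        positivity
    _ = Gamma (x + 1) := by
        rw [Gamma_eq_integral (by linarith), add_sub_cancel_right]

lemma div_Gamma_add_one (s : ℝ) : s / Gamma (s + 1) = 1 / Gamma s := by
  rcases eq_or_ne s 0 with rfl | hs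
  · simp [Gamma_zero]
  · rw [Gamma_add_one hs, div_mul_cancel_left₀ hs, one_div]

lemma integral_rpow_mul_one_sub_rpow {a b : ℝ} (ha : 0 < a) (hb : 0 < b) :
    ∫ s in (0 : ℝ)..1, s ^ (a - 1) * (1 - s) ^ (b - 1) = beta a b := by
  have hreal : Complex.betaIntegral a b
      = ((∫ s in (0 : ℝ)..1, s ^ (a - 1) * (1 - s) ^ (b - 1) : ℝ) : ℂ) := by
    rw [Complex.betaIntegral, ← intervalIntegral.integral_ofReal]
    refine intervalIntegral.integral_congr fun s hs => ?_
    rw [uIcc_of_le zero_le_one] at hs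
    push_cast [Complex.ofReal_cpow hs.1, Complex.ofReal_cpow (sub_nonneg.2 hs.2)]
    rfl
  rw [beta_eq_betaIntegralReal a b ha hb, hreal, Complex.ofReal_re]

-- A function that is not integrable would have integral `0` rather than `beta a b`.
lemma intervalIntegrable_rpow_mul_one_sub_rpow {a b : ℝ} (ha : 0 < a) (hb : 0 < b) :
    IntervalIntegrable (fun s : ℝ => s ^ (a - 1) * (1 - s) ^ (b - 1)) volume 0 1 :=
  not_imp_comm.1 intervalIntegral.integral_undef <| by
    rw [integral_rpow_mul_one_sub_rpow ha hb]
    exact (beta_pos ha hb).ne'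

lemma hasDerivAt_tsum_mul_pow {𝕜 : Type*} [RCLike 𝕜] {a : ℕ → 𝕜}
    (ha : ∀ x, Summable fun k => a k * x ^ k) (x : 𝕜) :
    HasDerivAt (fun y => ∑' k, a k * y ^ k) (∑' k : ℕ, (k + 1) * a (k + 1) * x ^ k) x := by
  let p := FormalMultilinearSeries.ofScalars 𝕜 a
  have hrad : p.radius = ⊤ := p.radius_eq_top_of_summable_norm fun r => by
    simpa [p, FormalMultilinearSeries.ofScalars_norm] using (ha (r : ℝ)).norm
  have hp : HasFPowerSeriesOnBall p.sum p 0 ⊤ :=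
    hrad ▸ p.hasFPowerSeriesOnBall (hrad ▸ ENNReal.zero_lt_top)
  have hsum : p.sum = fun y => ∑' k, a k * y ^ k := by
    ext y
    simp [p, FormalMultilinearSeries.sum, mul_comm]
  have hx : x ∈ Metric.eball (0 : 𝕜) ⊤ := by simp
  have hderiv : HasSum (fun k : ℕ => (k + 1) * a (k + 1) * x ^ k) (fderiv 𝕜 p.sum x 1) := by
    have := (ContinuousLinearMap.apply 𝕜 𝕜 (1 : 𝕜)).hasSum (hp.fderiv.hasSum hx)
    rw [zero_add] at this
    refine this.congr_fun fun k => ?_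
    simp [p, FormalMultilinearSeries.coeff_ofScalars, mul_comm]
  rw [hderiv.tsum_eq, ← hsum]
  exact (hp.differentiableOn.differentiableAt (by simp)).hasFDerivAt.hasDerivAt

lemma continuousWithinAt_rpow_neg_mul_sub {u : ℝ → ℝ} {u' α b : ℝ} {S : Set ℝ} (hα : α < 1)
    (hu : HasDerivWithinAt u u' S b) :
    ContinuousWithinAt (fun s => (b - s) ^ (-α) * (u s - u b)) S b := by
  have hslope : ∀ s, (b - s) ^ (-α) * (u s - u b) = -(b - s) ^ (1 - α) * slope u b s := by
    intro s
    rcases eq_or_ne s b with rfl | hs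
    · simp
    · have hbs : b - s ≠ 0 := sub_ne_zero.2 hs.symm
      rw [slope_def_field, show -α = (1 - α) - 1 by ring, rpow_sub_one hbs, ← neg_sub b s]
      field_simp
  have hpow : Tendsto (fun s => -(b - s) ^ (1 - α)) (𝓝[S \ {b}] b) (𝓝 0) := by
    have : Continuous fun s : ℝ => -(b - s) ^ (1 - α) :=
      ((continuous_rpow_const (sub_pos.2 hα).le).comp (continuous_const.sub continuous_id)).neg
    simpa [zero_rpow (sub_pos.2 hα).ne'] using (this.tendsto b).mono_left nhdsWithin_le_nhds
  rw [← continuousWithinAt_sdiff_self, ContinuousWithinAt]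
  simp only [sub_self, mul_zero, hslope]
  simpa using hpow.mul (hasDerivWithinAt_iff_tendsto_slope.1 hu)

lemma integral_rpow_neg_mul_deriv_le_of_isMinOn {u u' : ℝ → ℝ} {α a b : ℝ} (hα0 : 0 ≤ α)
    (hα1 : α < 1) (hab : a ≤ b) (hu : ContinuousOn u (Icc a b))
    (hu' : ∀ s ∈ Ioc a b, HasDerivWithinAt u (u' s) (Icc a b) s) (hmin : IsMinOn u (Icc a b) b)
    (hint : IntervalIntegrable (fun s => (b - s) ^ (-α) * u' s) volume a b) :
    ∫ s in a..b, (b - s) ^ (-α) * u' s ≤ (b - a) ^ (-α) * (u b - u a) := by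
  rcases hab.eq_or_lt with rfl | hlt
  · simp
  have hcont : ContinuousOn (fun s => (b - s) ^ (-α) * (u s - u b)) (Icc a b) := by
    intro s hs
    rcases hs.2.eq_or_lt with rfl | hsb
    · exact continuousWithinAt_rpow_neg_mul_sub hα1 (hu' s ⟨hlt, le_rfl⟩)
    · have hbs : b - s ≠ 0 := (sub_pos.2 hsb).ne'
      exact ((continuousWithinAt_const.sub continuousWithinAt_id).rpow_const (.inl hbs)).mul
        ((hu s hs).sub continuousWithinAt_const)
  have hderiv : ∀ s ∈ Ioo a b, HasDerivAt (fun s => (b - s) ^ (-α) * (u s - u b))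
      (α * (b - s) ^ (-α - 1) * (u s - u b) + (b - s) ^ (-α) * u' s) s := by
    intro s hs
    have hpow := ((hasDerivAt_id s).const_sub b).rpow_const (p := -α)
      (.inl (sub_pos.2 hs.2).ne')
    have hus := (hu' s (Ioo_subset_Ioc_self hs)).hasDerivAt (Icc_mem_nhds hs.1 hs.2)
    exact (hpow.mul (hus.sub_const (u b))).congr_deriv (by simp)
  have hle := intervalIntegral.integral_le_sub_of_hasDeriv_right_of_le hab hcont
    (fun s hs => (hderiv s hs).hasDerivWithinAt)
    ((intervalIntegrable_iff_integrableOn_Icc_of_le hab).1 hint) fun s hs => by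
      have hmin_s : 0 ≤ u s - u b := sub_nonneg.2 (hmin (Ioo_subset_Icc_self hs))
      have hbs : 0 < b - s := sub_pos.2 hs.2
      exact le_add_of_nonneg_left (by positivity)
  calc _ ≤ _ := hle
    _ = _ := by ring

/-- The two-parameter Mittag-Leffler function `E_{α,β}` on the reals, so that
`mittagLeffler₂ α 1 = mittagLeffler α`. It is the family in which derivatives and fractional
integrals of `E_{α,1}` live. Since `Gamma` vanishes at its poles, `1 / Gamma` has there the value
of its entire extension, and the series is the expected one for every real `β`. -/
noncomputable def mittagLeffler₂ (α β x : ℝ) : ℝ :=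
  ∑' k : ℕ, x ^ k / Gamma (α * k + β)

@[simp]
lemma mittagLeffler₂_one (α : ℝ) : mittagLeffler₂ α 1 = mittagLeffler α := rfl

@[simp]
lemma mittagLeffler_zero (α : ℝ) : mittagLeffler α 0 = 1 := by
  rw [mittagLeffler, tsum_eq_single 0 fun k hk => by simp [hk]]
  simp

lemma mittagLeffler_one (x : ℝ) : mittagLeffler 1 x = exp x := by
  rw [exp_eq_exp_ℝ, NormedSpace.exp_eq_tsum_div]
  exact tsum_congr fun k => by rw [one_mul, Gamma_nat_eq_factorial]

lemma summable_pow_div_Gamma {α : ℝ} (hα : 0 < α) (β x : ℝ) :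
    Summable fun k : ℕ => x ^ k / Gamma (α * k + β) := by
  obtain ⟨M, hM, hMα⟩ : ∃ M : ℝ, 0 < M ∧ M ^ α = |x| + 1 :=
    ⟨(|x| + 1) ^ α⁻¹, by positivity, rpow_inv_rpow (by positivity) hα.ne'⟩
  have hgeom : Summable fun k : ℕ => exp M * M ^ (1 - β) * (|x| / (|x| + 1)) ^ k :=
    (summable_geometric_of_lt_one (by positivity)
      ((div_lt_one (by positivity)).2 (lt_add_one _))).mul_left _
  have hlarge : ∀ᶠ k : ℕ in atTop, 1 ≤ α * k + β :=
    (tendsto_atTop_add_const_right _ _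
      (tendsto_natCast_atTop_atTop.const_mul_atTop hα)).eventually_ge_atTop 1
  refine hgeom.of_norm_bounded_eventually_nat ?_
  filter_upwards [hlarge] with k hk
  have hΓ : (|x| + 1) ^ k / (M ^ (1 - β) * exp M) ≤ Gamma (α * k + β) := by
    have := rpow_mul_exp_neg_le_Gamma_add_one hM.le (sub_nonneg.2 hk)
    rwa [sub_add_cancel, show α * k + β - 1 = α * k - (1 - β) by ring, rpow_sub hM,
      rpow_mul hM.le, hMα, rpow_natCast, exp_neg, ← div_eq_mul_inv, div_div] at this
  have hΓpos : 0 < Gamma (α * k + β) := Gamma_pos_of_pos (by linarith)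
  rw [norm_div, norm_pow, norm_eq_abs, norm_of_nonneg hΓpos.le]
  calc |x| ^ k / Gamma (α * k + β)
      ≤ |x| ^ k / ((|x| + 1) ^ k / (M ^ (1 - β) * exp M)) := by gcongr
    _ = exp M * M ^ (1 - β) * (|x| / (|x| + 1)) ^ k := by
        rw [div_pow]
        field_simp

lemma hasDerivAt_mittagLeffler₂ {α : ℝ} (hα : 0 < α) (β x : ℝ) :
    HasDerivAt (mittagLeffler₂ α β)
      ((mittagLeffler₂ α (α + β - 1) x - (β - 1) * mittagLeffler₂ α (α + β) x) / α) x := by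
  have hfun : mittagLeffler₂ α β = fun y => ∑' k : ℕ, (Gamma (α * k + β))⁻¹ * y ^ k := by
    ext y
    exact tsum_congr fun k => div_eq_inv_mul _ _
  have hterm : ∀ k : ℕ, (k + 1) * (Gamma (α * (k + 1 : ℕ) + β))⁻¹ * x ^ k
      = (x ^ k / Gamma (α * k + (α + β - 1))
          - (β - 1) * (x ^ k / Gamma (α * k + (α + β)))) / α := by
    intro k
    have hrec := div_Gamma_add_one (α * k + (α + β - 1))
    rw [show α * k + (α + β - 1) + 1 = α * k + (α + β) by ring] at hrec
    rw [div_eq_mul_one_div (x ^ k), ← hrec,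
      show α * ((k + 1 : ℕ) : ℝ) + β = α * k + (α + β) by push_cast; ring]
    field_simp
    ring
  have hder := hasDerivAt_tsum_mul_pow (a := fun k : ℕ => (Gamma (α * k + β))⁻¹)
    (fun y => (summable_pow_div_Gamma hα β y).congr fun k => div_eq_inv_mul _ _) x
  rw [hfun]
  refine hder.congr_deriv ?_
  simp only [hterm, tsum_div_const]
  rw [(summable_pow_div_Gamma hα _ x).tsum_sub ((summable_pow_div_Gamma hα _ x).mul_left _),
    tsum_mul_left]
  rfl

lemma continuous_mittagLeffler₂ {α : ℝ} (hα : 0 < α) (β : ℝ) :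
    Continuous (mittagLeffler₂ α β) :=
  continuous_iff_continuousAt.2 fun x => (hasDerivAt_mittagLeffler₂ hα β x).continuousAt

lemma hasDerivAt_mittagLeffler {α : ℝ} (hα : 0 < α) (x : ℝ) :
    HasDerivAt (mittagLeffler α) (mittagLeffler₂ α α x / α) x := by
  simpa only [mittagLeffler₂_one, add_sub_cancel_right, sub_self, zero_mul, sub_zero]
    using hasDerivAt_mittagLeffler₂ hα 1 x

lemma hasDerivAt_mittagLeffler_mul_rpow {α s : ℝ} (hα : 0 < α) (x : ℝ) (hs : 0 < s) :
    HasDerivAt (fun s => mittagLeffler α (x * s ^ α))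
      (x * s ^ (α - 1) * mittagLeffler₂ α α (x * s ^ α)) s := by
  refine ((hasDerivAt_mittagLeffler hα _).comp s
    ((hasDerivAt_rpow_const (.inl hs.ne')).const_mul x)).congr_deriv ?_
  field_simp

lemma intervalIntegrable_rpow_mul_mittagLeffler₂ {α β γ : ℝ} (hα : 0 < α) (hβ : 0 < β) (hγ : 0 < γ)
    (x : ℝ) :
    IntervalIntegrable
      (fun s => s ^ (β - 1) * (1 - s) ^ (γ - 1) * mittagLeffler₂ α β (x * s ^ α)) volume 0 1 :=
  (intervalIntegrable_rpow_mul_one_sub_rpow hβ hγ).mul_continuousOn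
    ((continuous_mittagLeffler₂ hα β).comp
      (continuous_const.mul (continuous_rpow_const hα.le))).continuousOn

lemma integral_rpow_mul_mittagLeffler₂ {α β γ : ℝ} (hα : 0 < α) (hβ : 0 < β) (hγ : 0 < γ)
    (x : ℝ) :
    ∫ s in (0 : ℝ)..1, s ^ (β - 1) * (1 - s) ^ (γ - 1) * mittagLeffler₂ α β (x * s ^ α)
      = Gamma γ * mittagLeffler₂ α (β + γ) x := by
  let w : ℕ → ℝ → ℝ := fun k s => s ^ (α * k + β - 1) * (1 - s) ^ (γ - 1)
  have hβk : ∀ k : ℕ, 0 < α * k + β := fun k => by positivity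
  have hint : ∀ (k : ℕ) (y : ℝ), ∫ s in Ioc (0 : ℝ) 1, y ^ k / Gamma (α * k + β) * w k s
      = Gamma γ * (y ^ k / Gamma (α * k + (β + γ))) := by
    intro k y
    have hΓ := (Gamma_pos_of_pos (hβk k)).ne'
    rw [← intervalIntegral.integral_of_le zero_le_one, intervalIntegral.integral_const_mul,
      integral_rpow_mul_one_sub_rpow (hβk k) hγ, beta, add_assoc]
    field_simp
  have hnorm : ∀ k : ℕ, ∫ s in Ioc (0 : ℝ) 1, ‖x ^ k / Gamma (α * k + β) * w k s‖
      = Gamma γ * (|x| ^ k / Gamma (α * k + (β + γ))) := by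
    intro k
    rw [← hint]
    refine setIntegral_congr_fun measurableSet_Ioc fun s hs => ?_
    have hw : 0 ≤ w k s :=
      mul_nonneg (rpow_nonneg hs.1.le _) (rpow_nonneg (sub_nonneg.2 hs.2) _)
    simp only [norm_mul, norm_div, norm_pow, norm_eq_abs, abs_of_nonneg hw,
      abs_of_pos (Gamma_pos_of_pos (hβk k))]
  have hsum := hasSum_integral_of_summable_integral_norm
    (μ := volume.restrict (Ioc 0 1)) (F := fun (k : ℕ) s => x ^ k / Gamma (α * k + β) * w k s)
    (fun k => ((intervalIntegrable_rpow_mul_one_sub_rpow (hβk k) hγ).1).const_mul _)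
    (by simpa only [hnorm] using (summable_pow_div_Gamma hα _ _).mul_left _)
  rw [mittagLeffler₂, ← tsum_mul_left, intervalIntegral.integral_of_le zero_le_one]
  simp only [hint] at hsum
  rw [hsum.tsum_eq]
  refine setIntegral_congr_fun measurableSet_Ioc fun s hs => ?_
  simp only [mittagLeffler₂, ← tsum_mul_left]
  refine tsum_congr fun k => ?_
  have hpow : s ^ (α * k + β - 1) = s ^ (β - 1) * (s ^ α) ^ k := by
    rw [← rpow_natCast (s ^ α) k, ← rpow_mul hs.1.le, ← rpow_add hs.1]
    ring_nf
  simp only [w, hpow, mul_pow]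
  ring

lemma intervalIntegrable_rpow_neg_mul_deriv_mittagLeffler {α : ℝ} (hα0 : 0 < α)
    (hα1 : α < 1) (x : ℝ) :
    IntervalIntegrable
      (fun s => (1 - s) ^ (-α) * (x * s ^ (α - 1) * mittagLeffler₂ α α (x * s ^ α)))
      volume 0 1 := by
  have h := (intervalIntegrable_rpow_mul_mittagLeffler₂ hα0 hα0 (sub_pos.2 hα1) x).const_mul x
  rw [sub_sub_cancel_left] at h
  exact h.congr fun s _ => by ring

lemma integral_rpow_neg_mul_deriv_mittagLeffler {α : ℝ} (hα0 : 0 < α)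
    (hα1 : α < 1) (x : ℝ) :
    ∫ s in (0 : ℝ)..1, (1 - s) ^ (-α) * (x * s ^ (α - 1) * mittagLeffler₂ α α (x * s ^ α))
      = x * (Gamma (1 - α) * mittagLeffler α x) := by
  have h := integral_rpow_mul_mittagLeffler₂ hα0 hα0 (sub_pos.2 hα1) x
  rw [sub_sub_cancel_left, add_sub_cancel, mittagLeffler₂_one] at h
  rw [← h, ← intervalIntegral.integral_const_mul]
  exact intervalIntegral.integral_congr fun s _ => by ring

lemma one_le_mul_mittagLeffler_of_isMinOn {α y : ℝ} (hα0 : 0 < α) (hα1 : α < 1) (hy : 0 ≤ y)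
    (hmin : IsMinOn (fun z => mittagLeffler α (-z)) (Icc 0 y) y) :
    1 ≤ (1 + Gamma (1 - α) * y) * mittagLeffler α (-y) := by
  have hcont : Continuous fun s : ℝ => mittagLeffler α (-y * s ^ α) :=
    (continuous_mittagLeffler₂ hα0 1).comp (continuous_const.mul (continuous_rpow_const hα0.le))
  have hmin' : IsMinOn (fun s : ℝ => mittagLeffler α (-y * s ^ α)) (Icc 0 1) 1 := by
    intro s hs
    have hsα : s ^ α ≤ 1 := rpow_le_one hs.1 hs.2 hα0.le
    have := hmin ⟨mul_nonneg hy (rpow_nonneg hs.1 α), mul_le_of_le_one_right hy hsα⟩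
    simpa using this
  have hle := integral_rpow_neg_mul_deriv_le_of_isMinOn hα0.le hα1 zero_le_one hcont.continuousOn
    (fun s hs => (hasDerivAt_mittagLeffler_mul_rpow hα0 (-y) hs.1).hasDerivWithinAt) hmin'
    (intervalIntegrable_rpow_neg_mul_deriv_mittagLeffler hα0 hα1 (-y))
  rw [integral_rpow_neg_mul_deriv_mittagLeffler hα0 hα1] at hle
  simp only [sub_zero, one_rpow, mul_one, one_mul, zero_rpow hα0.ne', mul_zero,
    mittagLeffler_zero] at hle
  linarith

lemma inv_one_add_Gamma_mul_le_mittagLeffler_neg {α x : ℝ} (hα0 : 0 < α) (hα1 : α < 1)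
    (hx : 0 ≤ x) :
    (1 + Gamma (1 - α) * x)⁻¹ ≤ mittagLeffler α (-x) := by
  have : 0 < Gamma (1 - α) := Gamma_pos_of_pos (sub_pos.2 hα1)
  have hcont : Continuous fun z => mittagLeffler α (-z) :=
    (continuous_mittagLeffler₂ hα0 1).comp continuous_neg
  obtain ⟨y, ⟨hy0, hyx⟩, hmin⟩ :=
    isCompact_Icc.exists_isMinOn (nonempty_Icc.2 hx) hcont.continuousOn
  have hy := one_le_mul_mittagLeffler_of_isMinOn hα0 hα1 hy0
    (hmin.on_subset (Icc_subset_Icc_right hyx))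
  calc (1 + Gamma (1 - α) * x)⁻¹ ≤ (1 + Gamma (1 - α) * y)⁻¹ := by gcongr
    _ ≤ mittagLeffler α (-y) := (inv_le_iff_one_le_mul₀' (by positivity)).2 hy
    _ ≤ mittagLeffler α (-x) := hmin ⟨hx, le_rfl⟩

lemma mittagLeffler_pos_of_nonneg {α x : ℝ} (hα : 0 < α) (hx : 0 ≤ x) :
    0 < mittagLeffler α x := by
  have hΓ : ∀ k : ℕ, 0 < Gamma (α * k + 1) := fun k => Gamma_pos_of_pos (by positivity)
  exact (summable_pow_div_Gamma hα 1 x).tsum_pos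
    (fun k => div_nonneg (pow_nonneg hx k) (hΓ k).le) 0 (by simp)

theorem mittagLeffler_pos_general {α : ℝ} (hα0 : 0 < α) (hα1 : α ≤ 1) (x : ℝ) :
    0 < mittagLeffler α x := by
  rcases hα1.eq_or_lt with rfl | hα1
  · exact mittagLeffler_one x ▸ exp_pos x
  rcases le_total 0 x with hx | hx
  · exact mittagLeffler_pos_of_nonneg hα0 hx
  · have : 0 < Gamma (1 - α) := Gamma_pos_of_pos (sub_pos.2 hα1)
    have hx_neg : 0 ≤ -x := neg_nonneg.2 hx
    calc 0 < (1 + Gamma (1 - α) * -x)⁻¹ := by positivity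
      _ ≤ mittagLeffler α x := by
        simpa only [neg_neg] using inv_one_add_Gamma_mul_le_mittagLeffler_neg hα0 hα1 hx_neg

/-- For 0 < α < 1, λ > 0 and T > 0 one has E_{α,1}(-λ T^α) > 0 (in particular ≠ 0);
this follows from the complete monotonicity of E_{α,1}(-·) on [0,∞). -/
theorem mittagLeffler_pos (α : ℝ) (hα0 : 0 < α) (hα1 : α < 1) :
    ∀ lam T : ℝ, 0 < lam → 0 < T → 0 < mittagLeffler α (-(lam * T ^ α)) :=
  fun _ _ _ _ => mittagLeffler_pos_general hα0 hα1.le _
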